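/- arXiv:1502.03184 — 2 statements merged into one kernel-verified Lean document; each statement's English description precedes it below -/
import Mathlib

section
/- For every e ≥ 0, the colon ideal (m^{[e+1]} : (x_0⋯x_n)^{p^{e+1}−p^e}) equals m^{[e]}. -/
/-!
Since the `p^e`-th power map is a ring homomorphism, `m^{[e]}` is the monomial ideal generated by
the `x_i^{p^e}`, and membership in it is a condition on exponents: every monomial `x^a` of the
polynomial has some `a_i ≥ p^e`. Multiplication by `(x_0⋯x_n)^c` adds `c` to every exponent, and
for `c = p^{e+1} - p^e` the condition `a_i + c ≥ p^{e+1}` reads `a_i ≥ p^e`.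
-/

open MvPolynomial

noncomputable section

/-- `I^{[e]}`-style bracket power: the ideal generated by `q`-th powers of elements of `I`. -/
def bracketPow {A : Type*} [CommRing A] (I : Ideal A) (q : ℕ) : Ideal A :=
  Ideal.span ((fun u => u ^ q) '' (I : Set A))

/-- The test ideal `τ(f^{1 - 1/p^e})`: the smallest ideal `a` with `f^{p^e - 1} ∈ a^{[e]}`. -/
def testIdeal {A : Type*} [CommRing A] (p : ℕ) (f : A) (e : ℕ) : Ideal A :=
  sInf {a : Ideal A | f ^ (p ^ e - 1) ∈ bracketPow a (p ^ e)}

/-- The homogeneous maximal ideal `m = (x_0, ..., x_n)`. -/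
def mxI (k : Type*) [Field k] (n : ℕ) : Ideal (MvPolynomial (Fin (n + 1)) k) :=
  Ideal.span (Set.range (X : Fin (n + 1) → MvPolynomial (Fin (n + 1)) k))

/-- The set of degrees of homogeneous elements of `(m^{[e]} : τ) \ m^{[e]}`. -/
def MeSet (k : Type*) [Field k] (n p : ℕ) (τ : Ideal (MvPolynomial (Fin (n + 1)) k))
    (e : ℕ) : Set ℕ :=
  {d : ℕ | ∃ g : MvPolynomial (Fin (n + 1)) k,
    g ∈ (bracketPow (mxI k n) (p ^ e)).colon τ ∧
    g ∉ bracketPow (mxI k n) (p ^ e) ∧ g.IsHomogeneous d}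

/-- `M_e`: the minimal degree of a homogeneous element of `(m^{[e]} : τ) \ m^{[e]}`. -/
def Me (k : Type*) [Field k] (n p : ℕ) (τ : Ideal (MvPolynomial (Fin (n + 1)) k))
    (e : ℕ) : ℕ :=
  sInf (MeSet k n p τ e)

/-- `e_0`: the least `e` with `τ ⊄ m^{[e]}`. -/
def e0 (k : Type*) [Field k] (n p : ℕ) (τ : Ideal (MvPolynomial (Fin (n + 1)) k)) : ℕ :=
  sInf {e : ℕ | ¬ τ ≤ bracketPow (mxI k n) (p ^ e)}

theorem bracketPow_span {A : Type*} [CommRing A] (p : ℕ) [ExpChar A p] (e : ℕ) (s : Set A) :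
    bracketPow (Ideal.span s) (p ^ e) = Ideal.span ((· ^ p ^ e) '' s) :=
  Ideal.map_span (iterateFrobenius A p e) s

section MonomialIdeal

variable {σ R : Type*} [CommSemiring R]

theorem mem_span_range_X_pow_iff {b : σ → ℕ} {f : MvPolynomial σ R} :
    f ∈ Ideal.span (Set.range fun i => (X i : MvPolynomial σ R) ^ b i) ↔
      ∀ a ∈ f.support, ∃ i, b i ≤ a i := by
  have monomial_generators : (Set.range fun i => (X i : MvPolynomial σ R) ^ b i) =
      (fun a => monomial a 1) '' Set.range fun i => Finsupp.single i (b i) := by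
    simp only [X_pow_eq_monomial, ← Set.range_comp, Function.comp_def]
  rw [monomial_generators, mem_ideal_span_monomial_image]
  simp only [Set.exists_range_iff, Finsupp.single_le_iff]

theorem support_mul_monomial_one (f : MvPolynomial σ R) (c : σ →₀ ℕ) :
    (f * monomial c 1).support = f.support.map (addRightEmbedding c) :=
  AddMonoidAlgebra.support_coeff_mul_single f _ (by simp) _

theorem colon_monomial_span_range_X_pow (b : σ → ℕ) (c : σ →₀ ℕ) :
    (Ideal.span (Set.range fun i => (X i : MvPolynomial σ R) ^ (b i + c i))).colon
        {monomial c 1} =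
      Ideal.span (Set.range fun i => X i ^ b i) := by
  ext f
  rw [Submodule.mem_colon_singleton, smul_eq_mul, mem_span_range_X_pow_iff,
    mem_span_range_X_pow_iff, support_mul_monomial_one]
  simp only [Finset.forall_mem_map, addRightEmbedding_apply, Finsupp.add_apply,
    add_le_add_iff_right]

theorem colon_prod_X_pow_span_range_X_pow [Fintype σ] (b c : σ → ℕ) :
    (Ideal.span (Set.range fun i => (X i : MvPolynomial σ R) ^ (b i + c i))).colon
        {∏ i, X i ^ c i} =
      Ideal.span (Set.range fun i => X i ^ b i) := by
  simpa only [prod_X_pow, Finsupp.indicator_of_mem (Finset.mem_univ _)] using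
    colon_monomial_span_range_X_pow (R := R) b
      (Finsupp.indicator Finset.univ fun i _ => c i)

end MonomialIdeal

theorem bracketPow_span_range_X {σ R : Type*} [CommRing R] (p : ℕ) [ExpChar R p] (e : ℕ) :
    bracketPow (Ideal.span (Set.range (X : σ → MvPolynomial σ R))) (p ^ e) =
      Ideal.span (Set.range fun i => X i ^ p ^ e) := by
  rw [bracketPow_span, ← Set.range_comp]
  rfl

theorem colon_prod_pow_eq_general {σ R : Type*} [Fintype σ] [CommRing R] {p : ℕ} [ExpChar R p]
    {d e : ℕ} (hde : d ≤ e) :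
    (bracketPow (Ideal.span (Set.range (X : σ → MvPolynomial σ R))) (p ^ e)).colon
        (Ideal.span {(∏ i, X i : MvPolynomial σ R) ^ (p ^ e - p ^ d)}) =
      bracketPow (Ideal.span (Set.range X)) (p ^ d) := by
  have exponent_split : p ^ d + (p ^ e - p ^ d) = p ^ e :=
    Nat.add_sub_of_le (Nat.pow_le_pow_right (expChar_pos R p) hde)
  calc
    _ = (Ideal.span (Set.range fun i => (X i : MvPolynomial σ R) ^ p ^ e)).colon
          {∏ i, X i ^ (p ^ e - p ^ d)} := by
      rw [Ideal.colon_span, bracketPow_span_range_X, Finset.prod_pow]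
    _ = (Ideal.span (Set.range fun i =>
          (X i : MvPolynomial σ R) ^ (p ^ d + (p ^ e - p ^ d)))).colon
          {∏ i, X i ^ (p ^ e - p ^ d)} := by
      rw [exponent_split]
    _ = Ideal.span (Set.range fun i => X i ^ p ^ d) :=
      colon_prod_X_pow_span_range_X_pow (fun _ => p ^ d) (fun _ => p ^ e - p ^ d)
    _ = _ := (bracketPow_span_range_X p d).symm

/-- For every `e ≥ 0`,
`(m^{[e+1]} : (x_0⋯x_n)^{p^{e+1}−p^e}) = m^{[e]}`. -/
theorem colon_prod_pow_eq {k : Type*} [Field k] {p n : ℕ} [Fact p.Prime] [CharP k p]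
    (e : ℕ) :
    (bracketPow (mxI k n) (p ^ (e + 1))).colon
        (Ideal.span {(∏ i, X i : MvPolynomial (Fin (n + 1)) k) ^ (p ^ (e + 1) - p ^ e)}) =
      bracketPow (mxI k n) (p ^ e) :=
  colon_prod_pow_eq_general e.le_succ

end
end

section
/- Let f ∈ R and write τ = τ(f^{1−1/p}). Then for every g ∈ R and every e ≥ 0: f^{p−1}·g^p ∈ m^{[e+1]} if and only if g ∈ (m^{[e]} : τ). -/
/-!
Over a commutative ring, call the *order ideal* of an element `x` of a module the ideal of all
`φ x`, with `φ` a linear form. In a projective module `M` the linear forms detect membership in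
`I M`, so `a x ∈ I M` means exactly that `a` multiplies the order ideal of `x` into `I`; and the
order ideal is the smallest `I` with `x ∈ I M`.

Let `A` be a ring whose `d`-fold Frobenius makes `A` a projective module over itself. Then
`J A = J^{[d]}` for this module structure, so `τ(f^{1 - 1/p^d})` is the order ideal of
`f^{p^d - 1}`, and the scalar multiple of `f^{p^d - 1}` by `g` is `f^{p^d - 1} g^{p^d}`. With
`J = I^{[e]}` this gives the theorem. The Frobenius of `k[x_0, …, x_n]` is the substitution
`x_i ↦ x_i^p` followed by the Frobenius of `k` on coefficients, and both of these are free.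
-/

open MvPolynomial

noncomputable section

section OrderIdeal

variable {R M : Type*} [CommSemiring R] [AddCommMonoid M] [Module R M]

variable (R) in
/-- The order ideal of an element `x` of a module: the values at `x` of all linear forms. -/
def orderIdeal (x : M) : Ideal R :=
  LinearMap.range (Module.Dual.eval R M x)

lemma apply_mem_orderIdeal (φ : Module.Dual R M) (x : M) : φ x ∈ orderIdeal R x :=
  ⟨φ, rfl⟩

lemma orderIdeal_le_of_mem_smul_top {I : Ideal R} {x : M} (hx : x ∈ I • (⊤ : Submodule R M)) :
    orderIdeal R x ≤ I := by
  rintro _ ⟨φ, rfl⟩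
  have hφx : φ x ∈ I • (⊤ : Submodule R M).map φ := by
    rw [← Submodule.map_smul'']
    exact Submodule.mem_map_of_mem hx
  exact Ideal.mul_le_left hφx

lemma orderIdeal_smul_le_iff {I : Ideal R} {a : R} {x : M} :
    orderIdeal R (a • x) ≤ I ↔ a ∈ I.colon (orderIdeal R x) := by
  simp [orderIdeal, SetLike.le_def, Submodule.mem_colon]

variable [Module.Projective R M]

lemma mem_orderIdeal_smul_top (x : M) : x ∈ orderIdeal R x • (⊤ : Submodule R M) := by
  obtain ⟨s, hs⟩ := Module.projective_def'.1 ‹Module.Projective R M›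
  have hx : ∑ y ∈ (s x).support, s x y • y = x := congr($hs x)
  have coord_mem (y : M) : s x y ∈ orderIdeal R x :=
    apply_mem_orderIdeal (Finsupp.lapply y ∘ₗ s) x
  have sum_mem : ∑ y ∈ (s x).support, s x y • y ∈ orderIdeal R x • (⊤ : Submodule R M) :=
    Submodule.sum_mem _ fun y _ => Submodule.smul_mem_smul (coord_mem y) Submodule.mem_top
  rwa [hx] at sum_mem

lemma mem_smul_top_iff_orderIdeal_le {I : Ideal R} {x : M} :
    x ∈ I • (⊤ : Submodule R M) ↔ orderIdeal R x ≤ I :=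
  ⟨orderIdeal_le_of_mem_smul_top,
    fun h => Submodule.smul_mono_left h (mem_orderIdeal_smul_top x)⟩

lemma sInf_mem_smul_top_eq_orderIdeal (x : M) :
    sInf {I : Ideal R | x ∈ I • (⊤ : Submodule R M)} = orderIdeal R x := by
  simp_rw [mem_smul_top_iff_orderIdeal_le]
  exact csInf_Ici

end OrderIdeal

lemma projective_trans {R S M : Type*} [CommSemiring R] [Semiring S] [AddCommMonoid M]
    [Algebra R S] [Module R M] [Module S M] [IsScalarTower R S M]
    [Module.Projective R S] [Module.Projective S M] : Module.Projective R M := by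
  classical
  obtain ⟨s, hs⟩ := Module.projective_def'.1 ‹Module.Projective S M›
  have : Module.Projective R (M →₀ S) := .of_equiv' (finsuppLequivDFinsupp R).symm
  exact .of_split (s.restrictScalars R) ((Finsupp.linearCombination S id).restrictScalars R)
    (LinearMap.ext fun x => congr($hs x))

/-- A ring homomorphism that makes its target a projective module over its source. Keeping source
and target apart lets this be applied to endomorphisms such as the Frobenius, where an `Algebra`
instance would clash with the one of the ring over itself. -/
def IsProjectiveRingHom {A B : Type*} [CommSemiring A] [CommSemiring B] (f : A →+* B) : Prop :=
  letI := f.toAlgebra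
  Module.Projective A B

namespace IsProjectiveRingHom

variable {A B C : Type*} [CommSemiring A] [CommSemiring B] [CommSemiring C]

lemma mul_mem_map_iff {f : A →+* B} (hf : IsProjectiveRingHom f) {I : Ideal A} {a : A} {x : B} :
    x * f a ∈ I.map f ↔ a ∈ I.colon (sInf {J : Ideal A | x ∈ J.map f} : Ideal A) := by
  let := f.toAlgebra
  have : Module.Projective A B := hf
  have mem_map_iff (J : Ideal A) (y : B) : y ∈ J.map f ↔ y ∈ J • (⊤ : Submodule A B) := by
    rw [Ideal.smul_top_eq_map]
    rfl
  have smul_eq : a • x = x * f a := by rw [Algebra.smul_def, mul_comm, RingHom.algebraMap_toAlgebra]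
  simp_rw [mem_map_iff]
  rw [sInf_mem_smul_top_eq_orderIdeal, ← orderIdeal_smul_le_iff, ← mem_smul_top_iff_orderIdeal_le,
    smul_eq]

lemma comp {g : B →+* C} {f : A →+* B} (hg : IsProjectiveRingHom g) (hf : IsProjectiveRingHom f) :
    IsProjectiveRingHom (g.comp f) := by
  let := f.toAlgebra
  let := g.toAlgebra
  let := (g.comp f).toAlgebra
  have : IsScalarTower A B C := .of_algebraMap_eq' rfl
  have : Module.Projective A B := hf
  have : Module.Projective B C := hg
  exact projective_trans (R := A) (S := B) (M := C)

lemma of_field {K L : Type*} [Field K] [CommRing L] (f : K →+* L) : IsProjectiveRingHom f := by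
  let := f.toAlgebra
  exact (inferInstance : Module.Projective K L)

lemma of_addEquiv {f : A →+* B} {ι : Type*} (e : (ι →₀ A) ≃+ B)
    (he : ∀ a v, e (a • v) = f a * e v) : IsProjectiveRingHom f := by
  let := f.toAlgebra
  exact .of_equiv' { e with map_smul' := fun a v => (he a v).trans (Algebra.smul_def a (e v)).symm }

attribute [local instance] MvPolynomial.algebraMvPolynomial in
lemma mvPolynomial_map (σ : Type*) {f : A →+* B} (hf : IsProjectiveRingHom f) :
    IsProjectiveRingHom (MvPolynomial.map (σ := σ) f) := by
  let := f.toAlgebra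
  have : Module.Projective A B := hf
  exact .of_equiv' (Algebra.IsPushout.out (R := A) (S := MvPolynomial σ A) (R' := B)
    (S' := MvPolynomial σ B)).equiv

end IsProjectiveRingHom

section Expand

variable {σ : Type*} (q : ℕ) [NeZero q]

/-- Entrywise division with remainder of an exponent vector, sending `m` to its remainder and
quotient by `q`. -/
def finsuppModDivEquiv : (σ →₀ ℕ) ≃ (σ →₀ Fin q) × (σ →₀ ℕ) where
  toFun m := (m.mapRange (Fin.ofNat q) (by simp), m.mapRange (· / q) (Nat.zero_div q))
  invFun am := q • am.2 + am.1.mapRange Fin.val (Fin.val_zero q)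
  left_inv m := by ext i; simp [Nat.div_add_mod]
  right_inv := by
    rintro ⟨a, m⟩
    ext i
    · simp [Nat.mod_eq_of_lt]
    · simp [Nat.mul_add_div (NeZero.pos q), Nat.div_eq_of_lt]

lemma finsuppModDivEquiv_symm_add (a : σ →₀ Fin q) (d m : σ →₀ ℕ) :
    (finsuppModDivEquiv q).symm (a, d + m) = q • d + (finsuppModDivEquiv q).symm (a, m) := by
  simp [finsuppModDivEquiv, add_assoc]

variable {R : Type*} [CommSemiring R]

variable (σ R) in
/-- Polynomials as families of polynomials: `v` corresponds to `∑ₐ v_a(x^q) xᵃ`, with `a` running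
over the exponent vectors with entries below `q`. -/
def expandSumEquiv : ((σ →₀ Fin q) →₀ MvPolynomial σ R) ≃+ MvPolynomial σ R :=
  ((AddMonoidAlgebra.mapDomainAddEquiv R (finsuppModDivEquiv q)).trans
    (AddMonoidAlgebra.curryAddEquiv.trans AddMonoidAlgebra.coeffAddEquiv)).symm

lemma expandSumEquiv_single_monomial (a : σ →₀ Fin q) (m : σ →₀ ℕ) (c : R) :
    expandSumEquiv σ q R (Finsupp.single a (monomial m c)) =
      monomial ((finsuppModDivEquiv q).symm (a, m)) c := by
  rw [expandSumEquiv, AddEquiv.symm_apply_eq]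
  simp [monomial]

lemma expandSumEquiv_smul (r : MvPolynomial σ R) (v : (σ →₀ Fin q) →₀ MvPolynomial σ R) :
    expandSumEquiv σ q R (r • v) = expand q r * expandSumEquiv σ q R v := by
  induction v using Finsupp.induction_linear with
  | zero => simp
  | add v w hv hw => rw [smul_add, map_add, hv, hw, map_add, mul_add]
  | single a s =>
    induction r using MvPolynomial.induction_on' with
    | add r₁ r₂ h₁ h₂ => rw [add_smul, map_add, h₁, h₂, map_add, add_mul]
    | monomial d b =>
      induction s using MvPolynomial.induction_on' with
      | add s₁ s₂ h₁ h₂ => rw [Finsupp.single_add, smul_add, map_add, h₁, h₂, map_add, mul_add]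
      | monomial m c =>
        rw [Finsupp.smul_single, smul_eq_mul, monomial_mul, expandSumEquiv_single_monomial,
          expandSumEquiv_single_monomial, expand_monomial, monomial_mul,
          finsuppModDivEquiv_symm_add]

variable (σ R) in
lemma isProjectiveRingHom_expand :
    IsProjectiveRingHom (expand q : MvPolynomial σ R →ₐ[R] MvPolynomial σ R).toRingHom :=
  .of_addEquiv (expandSumEquiv σ q R) (expandSumEquiv_smul q)

end Expand

section Frobenius

variable {A : Type*} [CommSemiring A] {p : ℕ} [ExpChar A p]

lemma iterateFrobenius_eq_map_comp_expand (σ : Type*) (d : ℕ) :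
    iterateFrobenius (MvPolynomial σ A) p d =
      (map (iterateFrobenius A p d)).comp (expand (p ^ d)).toRingHom := by
  ext <;> simp [iterateFrobenius_def]

lemma isProjectiveRingHom_iterateFrobenius_mvPolynomial (σ : Type*) {d : ℕ}
    (hA : IsProjectiveRingHom (iterateFrobenius A p d)) :
    IsProjectiveRingHom (iterateFrobenius (MvPolynomial σ A) p d) := by
  have : NeZero (p ^ d) := ⟨pow_ne_zero d (expChar_ne_zero A p)⟩
  rw [iterateFrobenius_eq_map_comp_expand]
  exact (hA.mvPolynomial_map σ).comp (isProjectiveRingHom_expand σ (p ^ d) A)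

end Frobenius

section BracketPow

variable {A : Type*} [CommRing A] {p : ℕ} [ExpChar A p]

lemma bracketPow_expChar_pow (I : Ideal A) (e : ℕ) :
    bracketPow I (p ^ e) = I.map (iterateFrobenius A p e) :=
  rfl

lemma bracketPow_expChar_pow_add (I : Ideal A) (e d : ℕ) :
    bracketPow I (p ^ (e + d)) = (bracketPow I (p ^ e)).map (iterateFrobenius A p d) := by
  rw [bracketPow_expChar_pow, bracketPow_expChar_pow, Ideal.map_map, add_comm, iterateFrobenius_add]

lemma testIdeal_eq_sInf_mem_map (f : A) (d : ℕ) :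
    testIdeal p f d = sInf {J : Ideal A | f ^ (p ^ d - 1) ∈ J.map (iterateFrobenius A p d)} :=
  rfl

theorem mul_pow_mem_bracketPow_iff_general {d : ℕ}
    (hA : IsProjectiveRingHom (iterateFrobenius A p d)) (I : Ideal A) (f g : A) (e : ℕ) :
    f ^ (p ^ d - 1) * g ^ p ^ d ∈ bracketPow I (p ^ (e + d)) ↔
      g ∈ (bracketPow I (p ^ e)).colon (testIdeal p f d) := by
  rw [bracketPow_expChar_pow_add, testIdeal_eq_sInf_mem_map, ← iterateFrobenius_def]
  exact hA.mul_mem_map_iff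

end BracketPow

/-- For `f ∈ R`, `τ = τ(f^{1−1/p})`, every `g ∈ R` and every `e ≥ 0`:
`f^{p−1}·g^p ∈ m^{[e+1]}` iff `g ∈ (m^{[e]} : τ)`. -/
theorem mul_pow_mem_bracketPow_iff {k : Type*} [Field k] {p n : ℕ}
    [Fact p.Prime] [CharP k p]
    (f g : MvPolynomial (Fin (n + 1)) k) (e : ℕ) :
    f ^ (p - 1) * g ^ p ∈ bracketPow (mxI k n) (p ^ (e + 1)) ↔
      g ∈ (bracketPow (mxI k n) (p ^ e)).colon (testIdeal p f 1) := by
  simpa only [pow_one] using mul_pow_mem_bracketPow_iff_general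
    (isProjectiveRingHom_iterateFrobenius_mvPolynomial _ (.of_field (iterateFrobenius k p 1)))
    (mxI k n) f g e

end
end
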